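/- Let m, n ∈ ℕ and let ξ₁,…,ξ_m ∈ ℝ and α₁,…,α_m ∈ ℝ. The following are equivalent: (1) for every family of coefficients c : {−n,…,n} → ℂ, the function f(θ) = Σ_{k=−n}^{n} c_k e^{ikθ} satisfies f′(θ) = Σ_{j=1}^{m} ξ_j · (f(θ + α_j) − f(θ − α_j)) for all θ ∈ ℝ; (2) for every k ∈ {1, …, n}, Σ_{j=1}^{m} ξ_j · sin(kα_j) = k/2. -/

import Mathlib

open Complex

lemma ssr_deriv (n : ℕ) (c : ℤ → ℂ) (θ : ℝ) :
    HasDerivAt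
        (fun θ : ℝ => ∑ k ∈ Finset.Icc (-(n : ℤ)) (n : ℤ), c k * Complex.exp (I * k * θ))
        (∑ k ∈ Finset.Icc (-(n : ℤ)) (n : ℤ), c k * (Complex.exp (I * k * θ) * (I * k))) θ := by
  apply HasDerivAt.fun_sum
  intro k _
  apply HasDerivAt.const_mul
  have h : HasDerivAt (fun θ : ℝ => I * k * (θ : ℂ)) (I * k * 1) θ :=
    (Complex.ofRealCLM.hasDerivAt (x := θ)).const_mul (I * (k : ℂ))
  rw [mul_one] at h
  exact h.cexp

lemma ssr_term (k : ℤ) (θ a : ℝ) :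
    Complex.exp (I * k * (θ + a)) - Complex.exp (I * k * (θ - a)) =
      Complex.exp (I * k * θ) * (2 * I * (Real.sin (k * a) : ℝ)) := by
  have h1 : I * (k : ℂ) * (θ + a) = I * k * θ + ((k : ℂ) * a) * I := by ring
  have h2 : I * (k : ℂ) * (θ - a) = I * k * θ + (-((k : ℂ) * a)) * I := by ring
  rw [h1, h2, Complex.exp_add, Complex.exp_add, Complex.exp_mul_I, Complex.exp_mul_I,
    Complex.cos_neg, Complex.sin_neg]
  push_cast
  ring

lemma ssr_rhs (m n : ℕ) (ξ α : Fin m → ℝ) (c : ℤ → ℂ) (θ : ℝ) :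
    (∑ j, (ξ j : ℂ) *
          ((∑ k ∈ Finset.Icc (-(n : ℤ)) (n : ℤ), c k * Complex.exp (I * k * (θ + α j))) -
           (∑ k ∈ Finset.Icc (-(n : ℤ)) (n : ℤ), c k * Complex.exp (I * k * (θ - α j))))) =
    ∑ k ∈ Finset.Icc (-(n : ℤ)) (n : ℤ), c k * (Complex.exp (I * k * θ) *
      (2 * I * ((∑ j, ξ j * Real.sin (k * α j) : ℝ) : ℂ))) := by
  simp_rw [← Finset.sum_sub_distrib, ← mul_sub, ssr_term, Finset.mul_sum]
  rw [Finset.sum_comm]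
  refine Finset.sum_congr rfl fun k _ => ?_
  rw [Complex.ofReal_sum]
  simp_rw [Finset.mul_sum]
  refine Finset.sum_congr rfl fun j _ => ?_
  push_cast
  ring

/-- Characterisation of all symmetric (±α) `m`-term parameter-shift rules for
trigonometric polynomials of degree at most `n`. -/
theorem symmetric_shift_rule_characterisation (m n : ℕ) (ξ α : Fin m → ℝ) :
    (∀ c : ℤ → ℂ, ∀ θ : ℝ,
      HasDerivAt
        (fun θ : ℝ => ∑ k ∈ Finset.Icc (-(n : ℤ)) (n : ℤ), c k * Complex.exp (I * k * θ))
        (∑ j, (ξ j : ℂ) *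
          ((∑ k ∈ Finset.Icc (-(n : ℤ)) (n : ℤ), c k * Complex.exp (I * k * (θ + α j))) -
           (∑ k ∈ Finset.Icc (-(n : ℤ)) (n : ℤ), c k * Complex.exp (I * k * (θ - α j))))) θ)
    ↔ (∀ k ∈ Finset.Icc 1 n, ∑ j, ξ j * Real.sin (k * α j) = (k : ℝ) / 2) := by
  constructor
  · intro h k hk
    rw [Finset.mem_Icc] at hk
    have h1 := (h (Pi.single (k : ℤ) 1) 0).unique (ssr_deriv n _ 0)
    rw [ssr_rhs] at h1
    have hm : (k : ℤ) ∈ Finset.Icc (-(n : ℤ)) (n : ℤ) := by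
      rw [Finset.mem_Icc]; omega
    rw [Finset.sum_eq_single_of_mem (k : ℤ) hm (by
        intro b _ hb; rw [Pi.single_eq_of_ne hb, zero_mul]),
      Finset.sum_eq_single_of_mem (k : ℤ) hm (by
        intro b _ hb; rw [Pi.single_eq_of_ne hb, zero_mul])] at h1
    rw [Pi.single_eq_same, one_mul, one_mul] at h1
    have h2 := mul_left_cancel₀ (Complex.exp_ne_zero _) h1
    have h3 : I * ((2 * (∑ j, ξ j * Real.sin (((k : ℤ) : ℝ) * α j)) : ℝ) : ℂ) =
        I * (((k : ℤ) : ℝ) : ℂ) := by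
      rw [Complex.ofReal_mul]
      push_cast at h2 ⊢
      linear_combination h2
    have h4 := Complex.ofReal_injective (mul_left_cancel₀ Complex.I_ne_zero h3)
    rw [Int.cast_natCast] at h4
    linarith
  · intro h c θ
    have key : ∀ k ∈ Finset.Icc (-(n : ℤ)) (n : ℤ),
        ∑ j, ξ j * Real.sin (k * α j) = (k : ℝ) / 2 := by
      intro k hk
      rw [Finset.mem_Icc] at hk
      obtain ⟨a, rfl | rfl⟩ := Int.eq_nat_or_neg k
      · rcases Nat.eq_zero_or_pos a with rfl | ha
        · simp
        · simpa using h a (Finset.mem_Icc.2 (by omega))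
      · rcases Nat.eq_zero_or_pos a with rfl | ha
        · simp
        · have := h a (Finset.mem_Icc.2 (by omega))
          simp only [Int.cast_neg, Int.cast_natCast, neg_mul, Real.sin_neg, mul_neg,
            Finset.sum_neg_distrib, this]
          ring
    rw [ssr_rhs]
    convert ssr_deriv n c θ using 1
    refine Finset.sum_congr rfl fun k hk => ?_
    rw [key k hk]
    push_cast
    ring
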